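/- arXiv:math/0304410 — 2 statements merged into one kernel-verified Lean document; each statement's English description precedes it below -/
import Mathlib

section
/- There exists a 23×23 matrix with all entries equal to 1 or -1 whose determinant equals 2^22 · 3 · 5^6 · 67 · 211. Consequently md(23) ≥ 2^22 · 3 · 5^6 · 67 · 211. -/
/-- `md n` is the maximal determinant of an `n × n` matrix all of whose
entries are `1` or `-1`. -/
noncomputable def md (n : ℕ) : ℤ :=
  sSup {d : ℤ | ∃ M : Matrix (Fin n) (Fin n) ℤ,
    (∀ i j, M i j = 1 ∨ M i j = -1) ∧ M.det = d}

/-!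
A sign matrix `W` of order 23 is exhibited together with the graph `H` on its rows for which
`W * Wᵀ = 24 I - J + 4 A(H)`, where `J` is the all-ones matrix and `A(H)` the adjacency matrix.
Only `|det W|` can be read off from this Gram matrix, but negating a row of `W` corrects the sign.

With `K = 6 I + A(H)` the Gram matrix is `4 K - J`, a rank-one perturbation of `4 K`, so its
determinant is `4 ^ 23 * det K * (1 - s / 4)`, where `s` is the sum of the coordinates of the
solution `x` of `K x = 1`. The graph `H` consists of two copies of the complete graph on four
vertices and of a graph on 15 vertices which falls into three-element orbits of the symmetric group
of degree 3. In each component `K` is made of square blocks `d I + c J`, hence its determinant and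
the vector `x` reduce to matrices of order at most 5:
`det K = (9 ^ 2 * 5 ^ 6) * (7600 * 5275 ^ 2)` and `1 - s / 4 = 67 ^ 2 / 10944`.
-/

section

open Matrix
open scoped Kronecker Nat

/-- Matrices all of whose entries are `1` or `-1`, the competitors in the definition of `md`. -/
def IsSignMatrix {m n : Type*} (M : Matrix m n ℤ) : Prop :=
  ∀ i j, M i j = 1 ∨ M i j = -1

namespace IsSignMatrix

theorem updateRow_neg {m n : Type*} [DecidableEq m] {M : Matrix m n ℤ} (hM : IsSignMatrix M)
    (i : m) : IsSignMatrix (M.updateRow i (-M i)) := by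
  intro k j
  rcases eq_or_ne k i with rfl | hk
  · simpa [neg_eq_iff_eq_neg, or_comm] using hM k j
  · simpa [hk] using hM k j

variable {n : Type*} [Fintype n] [DecidableEq n] {M : Matrix n n ℤ}

theorem exists_det_eq_abs_det [Nonempty n] (hM : IsSignMatrix M) :
    ∃ N : Matrix n n ℤ, IsSignMatrix N ∧ N.det = |M.det| := by
  rcases abs_choice M.det with h | h
  · exact ⟨M, hM, h.symm⟩
  · obtain ⟨i⟩ := ‹Nonempty n›
    refine ⟨M.updateRow i (-M i), hM.updateRow_neg i, ?_⟩
    rw [h, ← neg_one_smul ℤ (M i), det_updateRow_smul, updateRow_eq_self, neg_one_mul]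

theorem det_le_factorial (hM : IsSignMatrix M) : M.det ≤ (Fintype.card n)! := by
  have abs_entry_le (i j : n) : AbsoluteValue.abs (M i j) ≤ 1 := by
    rcases hM i j with h | h <;> simp [h]
  exact (le_abs_self _).trans (by simpa using Matrix.det_le abs_entry_le)

theorem det_le_md {k : ℕ} {N : Matrix (Fin k) (Fin k) ℤ} (hN : IsSignMatrix N) :
    N.det ≤ md k := by
  refine le_csSup ⟨(Fintype.card (Fin k))!, ?_⟩ ⟨N, hN, rfl⟩
  rintro _ ⟨M, hM : IsSignMatrix M, rfl⟩
  exact hM.det_le_factorial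

end IsSignMatrix

theorem det_sub_vecMulVec_of_mulVec_eq {n R : Type*} [Fintype n] [DecidableEq n] [CommRing R]
    {S : Matrix n n R} {u x : n → R} (hx : S *ᵥ x = u) (v : n → R) :
    (S - vecMulVec u v).det = S.det * (1 - v ⬝ᵥ x) := by
  have factor : S - vecMulVec u v = S * (1 + vecMulVec (-x) v) := by
    rw [Matrix.mul_add, Matrix.mul_one, mul_vecMulVec, mulVec_neg, hx, neg_vecMulVec,
      sub_eq_add_neg]
  rw [factor, det_mul, vecMulVec_eq Unit, det_one_add_replicateCol_mul_replicateRow,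
    dotProduct_neg, ← sub_eq_add_neg]

/-- The matrix obtained from `D` and `C` by replacing the `(i, j)` entry by the `κ × κ` block
`D i j • I + C i j • J`, where `J` is the all-ones matrix. -/
def blowUp {n R : Type*} [Semiring R] (κ : Type*) [DecidableEq κ] (D C : Matrix n n R) :
    Matrix (n × κ) (n × κ) R :=
  D ⊗ₖ 1 + C.submatrix Prod.fst Prod.fst

variable {n κ R : Type*} [Fintype n] [Fintype κ] [DecidableEq κ]

theorem kronecker_one_mul_submatrix_fst [Semiring R] (D X : Matrix n n R) :
    D ⊗ₖ (1 : Matrix κ κ R) * X.submatrix Prod.fst (Prod.fst : n × κ → n) =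
      (D * X).submatrix Prod.fst Prod.fst := by
  ext ⟨i, a⟩ ⟨j, b⟩
  simp [mul_apply, Fintype.sum_prod_type, one_apply]

theorem blowUp_mulVec_comp_fst [Semiring R] (D C : Matrix n n R) (y : n → R) :
    blowUp κ D C *ᵥ (y ∘ Prod.fst) = ((D + Fintype.card κ • C) *ᵥ y) ∘ Prod.fst := by
  ext ⟨i, a⟩
  simp [blowUp, mulVec, dotProduct, Fintype.sum_prod_type, add_mul, Finset.sum_add_distrib,
    one_apply, -nsmul_eq_mul, Matrix.smul_apply]

theorem det_blowUp [DecidableEq n] [Nonempty κ] [CommRing R] {D : Matrix n n R}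
    (hD : IsUnit D.det) (C : Matrix n n R) :
    (blowUp κ D C).det =
      (D + Fintype.card κ • C).det * D.det ^ (Fintype.card κ - 1) := by
  let U : Matrix (n × κ) n R := (D⁻¹ * C).submatrix Prod.fst id
  let V : Matrix n (n × κ) R := (1 : Matrix n n R).submatrix id Prod.fst
  have kronecker_mul_U_mul_V :
      D ⊗ₖ (1 : Matrix κ κ R) * (U * V) = C.submatrix Prod.fst Prod.fst := by
    have U_mul_V : U * V = (D⁻¹ * C).submatrix Prod.fst Prod.fst := by
      ext p q
      simp [U, V, mul_apply, one_apply]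
    rw [U_mul_V, kronecker_one_mul_submatrix_fst, mul_nonsing_inv_cancel_left D C hD]
  have V_mul_U : V * U = Fintype.card κ • (D⁻¹ * C) := by
    ext i j
    simp [U, V, mul_apply, Fintype.sum_prod_type, one_apply]
  calc (blowUp κ D C).det
      = (D ⊗ₖ (1 : Matrix κ κ R) * (1 + U * V)).det := by
        rw [Matrix.mul_add, Matrix.mul_one, kronecker_mul_U_mul_V, blowUp]
    _ = D.det ^ Fintype.card κ * (1 + Fintype.card κ • (D⁻¹ * C)).det := by
        rw [det_mul, det_kronecker, det_one, one_pow, mul_one, det_one_add_mul_comm, V_mul_U]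
    _ = (D * (1 + Fintype.card κ • (D⁻¹ * C))).det * D.det ^ (Fintype.card κ - 1) := by
        rw [det_mul, mul_right_comm, mul_pow_sub_one Fintype.card_ne_zero]
    _ = (D + Fintype.card κ • C).det * D.det ^ (Fintype.card κ - 1) := by
        rw [Matrix.mul_add, Matrix.mul_one, Matrix.mul_smul, mul_nonsing_inv_cancel_left D C hD]

/-- The `I`-coefficients of the `3 × 3` blocks of `6 I + A`, for the graph with vertices `a i`,
`b i`, `c i`, `d i`, `e i` (`i < 3`) and adjacency matrix `A` in which `a i, b i, c i, d i` are
pairwise adjacent for each `i`, the three `e i` are pairwise adjacent, and `e i` is adjacent to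
`a j` and `d j` for `j ≠ i`. -/
def orbitDiag : Matrix (Fin 5) (Fin 5) ℚ :=
  !![ 6, 1, 1, 1,-1;
      1, 6, 1, 1, 0;
      1, 1, 6, 1, 0;
      1, 1, 1, 6,-1;
     -1, 0, 0,-1, 5]

/-- The `J`-coefficients of the `3 × 3` blocks whose `I`-coefficients form `orbitDiag`. -/
def orbitConst : Matrix (Fin 5) (Fin 5) ℚ :=
  !![0, 0, 0, 0, 1;
     0, 0, 0, 0, 0;
     0, 0, 0, 0, 0;
     0, 0, 0, 0, 1;
     1, 0, 0, 1, 1]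

/-- The vertices of the graph `H`: two complete graphs on four vertices, and five orbits
`a, b, c, d, e` of three vertices each. -/
abbrev Vertex : Type :=
  Fin 2 × Fin 4 ⊕ Fin 5 × Fin 3

/-- The matrix `K = 6 I + A(H)`. -/
def gramCore : Matrix Vertex Vertex ℚ :=
  fromBlocks (blowUp (Fin 4) (diagonal 5) 1) 0 0 (blowUp (Fin 3) orbitDiag orbitConst)

theorem det_orbitDiag : orbitDiag.det = 5275 := by
  decide +kernel

theorem det_orbitDiag_add_smul_orbitConst : (orbitDiag + 3 • orbitConst).det = 7600 := by
  decide +kernel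

theorem det_gramCore : gramCore.det = (9 ^ 2 * 5 ^ 6) * (7600 * 5275 ^ 2) := by
  have det_cliques : (blowUp (Fin 4) (diagonal 5) (1 : Matrix (Fin 2) (Fin 2) ℚ)).det =
      9 ^ 2 * 5 ^ 6 := by
    rw [det_blowUp (by norm_num [det_diagonal])]
    have det_quotient : (diagonal 5 + 4 • 1 : Matrix (Fin 2) (Fin 2) ℚ).det = 9 ^ 2 := by
      decide +kernel
    rw [Fintype.card_fin, det_quotient, det_diagonal]
    norm_num
  have det_orbits : (blowUp (Fin 3) orbitDiag orbitConst).det = 7600 * 5275 ^ 2 := by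
    rw [det_blowUp (by norm_num [det_orbitDiag]), det_orbitDiag, Fintype.card_fin,
      det_orbitDiag_add_smul_orbitConst]
  rw [gramCore, det_fromBlocks_zero₂₁, det_cliques, det_orbits]

/-- The solution `x` of `K x = 1` on the vertices `a i`, `b i`, `c i`, `d i`, `e i`, as a function
of the orbit. -/
def orbitSolution : Fin 5 → ℚ :=
  ![26 / 304, 36 / 304, 36 / 304, 26 / 304, 25 / 304]

/-- The solution `x` of `K x = 1`. -/
def gramCoreSolution : Vertex → ℚ :=
  Sum.elim ((fun _ ↦ 1 / 9) ∘ Prod.fst) (orbitSolution ∘ Prod.fst)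

theorem gramCore_mulVec_gramCoreSolution : gramCore *ᵥ gramCoreSolution = 1 := by
  have cliques : (diagonal 5 + 4 • 1 : Matrix (Fin 2) (Fin 2) ℚ) *ᵥ (fun _ ↦ 1 / 9) = 1 := by
    decide +kernel
  have orbits : (orbitDiag + 3 • orbitConst) *ᵥ orbitSolution = 1 := by
    decide +kernel
  rw [gramCore, gramCoreSolution, fromBlocks_mulVec, Sum.elim_comp_inl, Sum.elim_comp_inr,
    blowUp_mulVec_comp_fst, blowUp_mulVec_comp_fst, Fintype.card_fin, Fintype.card_fin, cliques,
    orbits, zero_mulVec, zero_mulVec, add_zero, zero_add]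
  exact Sum.elim_one_one

theorem det_four_smul_gramCore_sub_vecMulVec_one :
    ((4 : ℚ) • gramCore - vecMulVec 1 1).det = (2 ^ 22 * 3 * 5 ^ 6 * 67 * 211) ^ 2 := by
  have solution : ((4 : ℚ) • gramCore) *ᵥ ((1 / 4 : ℚ) • gramCoreSolution) = 1 := by
    rw [smul_mulVec, mulVec_smul, gramCore_mulVec_gramCoreSolution, smul_smul]
    norm_num
  have sum_solution : 1 ⬝ᵥ gramCoreSolution = 6455 / 2736 := by
    decide +kernel
  rw [det_sub_vecMulVec_of_mulVec_eq solution, det_smul, det_gramCore, dotProduct_smul,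
    sum_solution]
  norm_num

/-- The sign matrix `W`. Its rows are ordered as the vertices of `H` are by `vertexEquivFin`. -/
def recordMatrix : Matrix (Fin 23) (Fin 23) ℤ :=
  !![-1,-1,-1,-1,-1, 1, 1, 1,-1,-1,-1, 1, 1, 1, 1, 1, 1,-1,-1,-1, 1, 1, 1;
     -1,-1,-1,-1, 1, 1,-1, 1, 1,-1, 1,-1, 1,-1,-1,-1, 1, 1, 1,-1, 1, 1, 1;
     -1,-1,-1,-1, 1, 1, 1,-1, 1, 1,-1,-1,-1, 1, 1,-1,-1,-1, 1, 1, 1, 1, 1;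
     -1,-1,-1,-1, 1,-1, 1, 1,-1, 1, 1, 1,-1,-1,-1, 1,-1, 1,-1, 1, 1, 1, 1;
     -1, 1, 1, 1,-1,-1,-1,-1, 1, 1, 1,-1,-1,-1, 1, 1, 1,-1,-1,-1, 1, 1, 1;
      1, 1, 1,-1,-1,-1,-1,-1, 1,-1,-1,-1, 1, 1,-1, 1,-1, 1,-1, 1, 1, 1, 1;
      1,-1, 1, 1,-1,-1,-1,-1,-1, 1,-1, 1,-1, 1,-1,-1, 1, 1, 1,-1, 1, 1, 1;
      1, 1,-1, 1,-1,-1,-1,-1,-1,-1, 1, 1, 1,-1, 1,-1,-1,-1, 1, 1, 1, 1, 1;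
     -1, 1, 1,-1, 1, 1,-1,-1,-1,-1,-1, 1,-1,-1, 1,-1,-1, 1,-1,-1,-1,-1, 1;
     -1,-1, 1, 1, 1,-1, 1,-1,-1,-1,-1,-1, 1,-1,-1, 1,-1,-1, 1,-1, 1,-1,-1;
     -1, 1,-1, 1, 1,-1,-1, 1,-1,-1,-1,-1,-1, 1,-1,-1, 1,-1,-1, 1,-1, 1,-1;
      1, 1,-1,-1, 1,-1, 1,-1, 1,-1,-1, 1,-1,-1, 1, 1, 1, 1, 1,-1,-1, 1,-1;
      1,-1, 1,-1, 1,-1,-1, 1,-1, 1,-1,-1, 1,-1, 1, 1, 1,-1, 1, 1,-1,-1, 1;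
      1,-1,-1, 1, 1, 1,-1,-1,-1,-1, 1,-1,-1, 1, 1, 1, 1, 1,-1, 1, 1,-1,-1;
     -1,-1, 1, 1,-1, 1,-1, 1, 1,-1,-1, 1,-1,-1, 1, 1,-1, 1, 1, 1,-1, 1,-1;
     -1, 1,-1, 1,-1, 1, 1,-1,-1, 1,-1,-1, 1,-1,-1, 1, 1, 1, 1, 1,-1,-1, 1;
     -1, 1, 1,-1,-1,-1, 1, 1,-1,-1, 1,-1,-1, 1, 1,-1, 1, 1, 1, 1, 1,-1,-1;
      1,-1,-1, 1,-1,-1, 1, 1, 1,-1,-1,-1,-1,-1, 1,-1,-1, 1,-1,-1,-1,-1, 1;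
      1, 1,-1,-1,-1, 1,-1, 1,-1, 1,-1,-1,-1,-1,-1, 1,-1,-1, 1,-1, 1,-1,-1;
      1,-1, 1,-1,-1, 1, 1,-1,-1,-1, 1,-1,-1,-1,-1,-1, 1,-1,-1, 1,-1, 1,-1;
      1, 1, 1, 1, 1, 1, 1, 1,-1,-1, 1,-1,-1, 1,-1, 1,-1,-1, 1,-1,-1, 1, 1;
      1, 1, 1, 1, 1, 1, 1, 1, 1,-1,-1, 1,-1,-1,-1,-1, 1,-1,-1, 1, 1,-1, 1;
      1, 1, 1, 1, 1, 1, 1, 1,-1, 1,-1,-1, 1,-1, 1,-1,-1, 1,-1,-1, 1, 1,-1]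

/-- The lexicographic numbering of the vertices of `H`. -/
def vertexEquivFin : Vertex ≃ Fin 23 :=
  (finProdFinEquiv.sumCongr finProdFinEquiv).trans finSumFinEquiv

theorem isSignMatrix_recordMatrix : IsSignMatrix recordMatrix := by
  have natAbs_entry : ∀ i j, (recordMatrix i j).natAbs = 1 := by
    decide +kernel
  exact fun i j ↦ Int.isUnit_iff.1 (Int.isUnit_iff_natAbs_eq.2 (natAbs_entry i j))

theorem gram_recordMatrix :
    ((recordMatrix * recordMatrixᵀ).submatrix vertexEquivFin vertexEquivFin).map
      (Int.cast : ℤ → ℚ) = (4 : ℚ) • gramCore - vecMulVec 1 1 := by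
  decide +kernel

theorem abs_det_recordMatrix : |recordMatrix.det| = 2 ^ 22 * 3 * 5 ^ 6 * 67 * 211 := by
  have det_sq : recordMatrix.det ^ 2 = (2 ^ 22 * 3 * 5 ^ 6 * 67 * 211) ^ 2 := by
    have h := congrArg det gram_recordMatrix
    rw [← Int.cast_det, det_submatrix_equiv_self, det_mul, det_transpose, ← sq,
      det_four_smul_gramCore_sub_vecMulVec_one] at h
    exact_mod_cast h
  exact (sq_eq_sq₀ (abs_nonneg _) (by norm_num)).1 ((sq_abs _).trans det_sq)

end

theorem stmt_1 :
    (∃ M : Matrix (Fin 23) (Fin 23) ℤ,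
      (∀ i j, M i j = 1 ∨ M i j = -1) ∧ M.det = 2^22 * 3 * 5^6 * 67 * 211) ∧
    (2^22 * 3 * 5^6 * 67 * 211 : ℤ) ≤ md 23 := by
  obtain ⟨M, hM, hdet⟩ := isSignMatrix_recordMatrix.exists_det_eq_abs_det
  rw [abs_det_recordMatrix] at hdet
  exact ⟨⟨M, hM, hdet⟩, hdet ▸ hM.det_le_md⟩
end

section
/- There exists a 31×31 matrix with all entries equal to 1 or -1 whose determinant equals 2^30 · 7^12 · 5324. Consequently md(31) ≥ 2^30 · 7^12 · 5324. -/
/-!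
Let `Q` be the Paley core of order `n = 7`, let `K = J - 2` be the Hadamard matrix of order `h = 4`
with constant row sums, and let `F` be the `4 × 3` matrix obtained from a normalization of `K` by
deleting its constant column. The matrix is `M = [A, U; Uᵀ, J]` with `A = Q ⊗ K - 1 ⊗ J` and `U`
the vertical repetition of `n` copies of `F`. Since `A U = 0` and `Uᵀ U = h n`, column operations
show that the lower right corner does not affect the determinant. With the corner replaced by `0`,
the Gram matrix is block diagonal with blocks `A Aᵀ + U Uᵀ = 1 ⊗ (h n + h J) - J` and `h n`; here
the constant row sums of `K` and the skewness of `Q` make the cross terms of `A Aᵀ` cancel. The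
determinant of the first block follows from two updates by multiples of `J`. This gives
`(det M) ^ 2`, and exchanging two rows, if necessary, makes `det M` positive.
-/

open Matrix Fintype
open scoped Kronecker

local notation "J" => Matrix.of 1

section Determinant

variable {m k R : Type*} [Fintype m] [CommRing R]

theorem ones_mul_ones {l n : Type*} :
    (J : Matrix l m R) * (J : Matrix m n R) = (card m : R) • J := by
  ext
  simp [mul_apply]

variable [DecidableEq m]

-- The factor `s` on the left takes the place of the exponent `card m - 1` on the right.
theorem mul_det_smul_one_add_smul_ones (s t : R) :
    s * (s • 1 + t • J : Matrix m m R).det = s ^ card m * (s + card m * t) := by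
  rcases isEmpty_or_nonempty m with hm | hm
  · simp
  have hchar := eval_charpoly (vecMulVec (fun _ : m => -t) 1) s
  rw [charpoly_vecMulVec] at hchar
  have hmat : s • 1 + t • J = scalar m s - vecMulVec (fun _ : m => -t) 1 := by
    ext i j
    simp [smul_one_eq_diagonal]
  have hdot : (fun _ : m => -t) ⬝ᵥ 1 = -(card m * t) := by simp [dotProduct]
  have hpow : s * s ^ (card m - 1) = s ^ card m := mul_pow_sub_one card_ne_zero s
  rw [hmat, ← hchar, hdot]
  simp only [Polynomial.eval_sub, Polynomial.eval_pow, Polynomial.eval_X, Polynomial.eval_smul,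
    smul_eq_mul]
  linear_combination card m * t * hpow

variable [IsDomain R]

theorem mul_det_add_smul_ones {A : Matrix m m R} {s : R} (hs : s ≠ 0)
    (hA : A * J = s • (J : Matrix m m R)) (t : R) :
    s * (A + t • J).det = (s + card m * t) * A.det := by
  have hmul : A * (s • 1 + t • J) = s • (A + t • J) := by
    rw [Matrix.mul_add, Matrix.mul_smul, Matrix.mul_smul, hA, Matrix.mul_one, smul_add, smul_comm]
  apply mul_left_cancel₀ (pow_ne_zero (card m) hs)
  calc s ^ card m * (s * (A + t • J).det)
      = s * (s • (A + t • J)).det := by rw [det_smul]; ring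
    _ = A.det * (s * (s • 1 + t • J : Matrix m m R).det) := by rw [← hmul, det_mul]; ring
    _ = s ^ card m * ((s + card m * t) * A.det) := by
      rw [mul_det_smul_one_add_smul_ones]; ring

variable [Fintype k] [DecidableEq k]

theorem det_fromBlocks_eq_of_mul_eq_zero {A : Matrix m m R} {U : Matrix m k R} {c : R}
    (hc : c ≠ 0) (hAU : A * U = 0) (hUU : Uᵀ * U = c • 1) (C : Matrix k k R) :
    (fromBlocks A U Uᵀ C).det = (fromBlocks A U Uᵀ 0).det := by
  have hmul : fromBlocks A U Uᵀ C * fromBlocks 1 (-(U * C)) 0 (c • 1) =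
      fromBlocks A U Uᵀ 0 * fromBlocks 1 0 0 (c • 1) := by
    simp [fromBlocks_multiply, ← Matrix.mul_assoc, hAU, hUU]
  have hdet := congrArg det hmul
  simp only [det_mul, det_fromBlocks_zero₂₁, det_smul, det_one, mul_one, one_mul] at hdet
  exact mul_right_cancel₀ (pow_ne_zero _ hc) hdet

theorem det_fromBlocks_sq_of_mul_eq_zero {A : Matrix m m R} {U : Matrix m k R} {c : R}
    (hc : c ≠ 0) (hAU : A * U = 0) (hUU : Uᵀ * U = c • 1) (C : Matrix k k R) :
    (fromBlocks A U Uᵀ C).det ^ 2 = (A * Aᵀ + U * Uᵀ).det * c ^ card k := by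
  have hgram : fromBlocks A U Uᵀ 0 * (fromBlocks A U Uᵀ 0)ᵀ =
      fromBlocks (A * Aᵀ + U * Uᵀ) 0 0 (c • 1) := by
    have hUA : Uᵀ * Aᵀ = 0 := by rw [← transpose_mul, hAU, transpose_zero]
    simp [fromBlocks_transpose, fromBlocks_multiply, hAU, hUA, hUU]
  rw [det_fromBlocks_eq_of_mul_eq_zero hc hAU hUU, pow_two]
  nth_rw 2 [← det_transpose]
  rw [← det_mul, hgram, det_fromBlocks_zero₂₁, det_smul, det_one, mul_one]

end Determinant

/-- `Q` is the core of a skew conference matrix: bordering it by a row of `1`s, a column of `-1`s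
and a corner `0` gives a skew-symmetric conference matrix. -/
structure IsSkewConferenceCore {ι : Type*} [Fintype ι] [DecidableEq ι] (Q : Matrix ι ι ℤ) :
    Prop where
  transpose_eq_neg : Qᵀ = -Q
  apply_of_ne (i j : ι) (hij : i ≠ j) : Q i j = 1 ∨ Q i j = -1
  mul_transpose : Q * Qᵀ = (card ι : ℤ) • 1 - J

namespace IsSkewConferenceCore

variable {ι : Type*} [Fintype ι] [DecidableEq ι] {Q : Matrix ι ι ℤ}

theorem apply_self (hQ : IsSkewConferenceCore Q) (i : ι) : Q i i = 0 := by
  have h : Q i i = -Q i i := congrFun (congrFun hQ.transpose_eq_neg i) i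
  lia

theorem mul_ones (hQ : IsSkewConferenceCore Q) {k : Type*} : Q * (J : Matrix ι k ℤ) = 0 := by
  have hgram : (Q *ᵥ 1) ⬝ᵥ (Q *ᵥ 1) = 0 := by
    have hQQ : Qᵀ * Q = (card ι : ℤ) • 1 - J := by
      rw [← hQ.mul_transpose, hQ.transpose_eq_neg, Matrix.neg_mul, Matrix.mul_neg]
    have hJ : (J : Matrix ι ι ℤ) *ᵥ 1 = (card ι : ℤ) • 1 := by ext; simp [mulVec, dotProduct]
    rw [dotProduct_mulVec, vecMul_mulVec, ← dotProduct_mulVec, hQQ, sub_mulVec, hJ,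
      smul_mulVec, one_mulVec, sub_self, dotProduct_zero]
  ext i j
  simpa [mulVec, mul_apply, dotProduct] using congrFun (dotProduct_self_eq_zero.mp hgram) i

end IsSkewConferenceCore

section Paley

variable (F : Type*) [Field F] [Fintype F] [DecidableEq F]

/-- The Paley (Jacobsthal) matrix of a finite field. -/
def paleyCore : Matrix F F ℤ := of fun a b => quadraticChar F (a - b)

variable {F}

theorem sum_quadraticChar_sub_mul_sub (hF : ringChar F ≠ 2) {a b : F} (hab : a ≠ b) :
    ∑ x, quadraticChar F (a - x) * quadraticChar F (b - x) = -1 := by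
  set χ := quadraticChar F
  have hd : a - b ≠ 0 := sub_ne_zero.mpr hab
  have hχ_neg_one : χ (-1) * χ (-1) = 1 := by rw [← map_mul]; simp
  have hχ_sub : χ (a - b) * χ (a - b) = 1 := by
    rw [← pow_two]; exact quadraticChar_sq_one hd
  have hjacobi : jacobiSum χ χ = -χ (-1) := by
    have h := jacobiSum_nontrivial_inv (quadraticChar_ne_one hF)
    rwa [(quadraticChar_isQuadratic F).inv] at h
  calc ∑ x, χ (a - x) * χ (b - x)
      = ∑ y, χ (a - (a - (a - b) * y)) * χ (b - (a - (a - b) * y)) :=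
        (((Equiv.mulLeft₀ (a - b) hd).trans (Equiv.subLeft a)).sum_comp _).symm
    _ = ∑ y, χ (-1) * (χ y * χ (1 - y)) := by
        refine Finset.sum_congr rfl fun y _ => ?_
        rw [show a - (a - (a - b) * y) = (a - b) * y by ring,
          show b - (a - (a - b) * y) = -1 * (a - b) * (1 - y) by ring, map_mul, map_mul, map_mul]
        linear_combination χ y * χ (-1) * χ (1 - y) * hχ_sub
    _ = -1 := by
        rw [← Finset.mul_sum, ← jacobiSum, hjacobi, mul_neg, hχ_neg_one]

theorem isSkewConferenceCore_paleyCore (hF : card F % 4 = 3) :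
    IsSkewConferenceCore (paleyCore F) := by
  have hneg : quadraticChar F (-1) = -1 :=
    quadraticChar_neg_one_iff_not_isSquare.mpr
      fun h => FiniteField.isSquare_neg_one_iff.mp h hF
  have hchar : ringChar F ≠ 2 := fun h => by
    have := FiniteField.even_card_of_char_two h
    lia
  refine ⟨?_, fun a b hab => quadraticChar_dichotomy (sub_ne_zero.mpr hab), ?_⟩
  · ext a b
    have h := map_mul (quadraticChar F) (-1) (a - b)
    simpa [paleyCore, hneg] using h
  · ext a b
    simp only [paleyCore, mul_apply, transpose_apply, of_apply, Matrix.sub_apply,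
      Matrix.smul_apply, one_apply, Pi.one_apply, smul_eq_mul]
    rcases eq_or_ne a b with rfl | hab
    · have hsq (x : F) : quadraticChar F (a - x) * quadraticChar F (a - x) =
          1 - if a = x then 1 else 0 := by
        rcases eq_or_ne a x with rfl | hx
        · simp
        · rw [← pow_two, quadraticChar_sq_one (sub_ne_zero.mpr hx), if_neg hx, sub_zero]
      simp [hsq, -quadraticChar_apply]
    · rw [sum_quadraticChar_sub_mul_sub hchar hab, if_neg hab]
      norm_num

end Paley

section BorderedCore

variable {ι κ : Type*}

/-- The large diagonal block `Q ⊗ K - 1 ⊗ J` of `borderedCore`. -/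
def coreBlock [DecidableEq ι] (Q : Matrix ι ι ℤ) (K : Matrix κ κ ℤ) :
    Matrix (ι × κ) (ι × κ) ℤ :=
  Q ⊗ₖ K - 1 ⊗ₖ J

/-- The rows of `K` are multiplied by signs that make its column `q₀` constant, this column is
deleted, and the result is repeated vertically once for each element of `ι`. -/
def border (ι : Type*) (K : Matrix κ κ ℤ) (q₀ : κ) : Matrix (ι × κ) {q // q ≠ q₀} ℤ :=
  of fun a q => K a.2 q₀ * K a.2 q

/-- The matrix of order `|ι| |κ| + |κ| - 1` built from a core `Q` and a Hadamard matrix `K`.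
Its lower right corner does not affect the determinant; any signs would do. -/
def borderedCore [DecidableEq ι] (Q : Matrix ι ι ℤ) (K : Matrix κ κ ℤ) (q₀ : κ) :
    Matrix (ι × κ ⊕ {q // q ≠ q₀}) (ι × κ ⊕ {q // q ≠ q₀}) ℤ :=
  fromBlocks (coreBlock Q K) (border ι K q₀) (border ι K q₀)ᵀ J

variable [Fintype κ] [DecidableEq κ] {Q : Matrix ι ι ℤ} {K : Matrix κ κ ℤ}

theorem sum_mul_apply_of_isHadamard (hK : K.IsHadamard) (p p' : κ) :
    ∑ q, K p q * K p' q = if p = p' then (card κ : ℤ) else 0 := by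
  simpa [mul_apply, one_apply] using congrFun (congrFun hK.mul_conjTranspose p) p'

theorem apply_mul_self_of_isHadamard (hK : K.IsHadamard) (p q : κ) : K p q * K p q = 1 := by
  simpa using Unitary.star_mul_self_of_mem (hK.apply_mem p q)

theorem border_mul_transpose (hK : K.IsHadamard) (q₀ : κ) :
    border ι K q₀ * (border ι K q₀)ᵀ = (J : Matrix ι ι ℤ) ⊗ₖ ((card κ : ℤ) • 1 - J) := by
  ext ⟨i, p⟩ ⟨i', p'⟩
  have hsum : ∑ q : {q // q ≠ q₀}, K p q * K p' q =
      (if p = p' then (card κ : ℤ) else 0) - K p q₀ * K p' q₀ := by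
    rw [← sum_mul_apply_of_isHadamard hK, Fintype.sum_eq_add_sum_subtype_ne _ q₀,
      add_sub_cancel_left]
  calc ∑ q : {q // q ≠ q₀}, K p q₀ * K p q * (K p' q₀ * K p' q)
      = K p q₀ * K p' q₀ * ∑ q : {q // q ≠ q₀}, K p q * K p' q := by
        rw [Finset.mul_sum]
        exact Finset.sum_congr rfl fun _ _ => mul_mul_mul_comm ..
    _ = (if p = p' then (card κ : ℤ) else 0) - 1 := by
        rw [hsum]
        have hp := apply_mul_self_of_isHadamard hK p q₀
        have hp' := apply_mul_self_of_isHadamard hK p' q₀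
        split_ifs with h
        · subst h
          linear_combination (card κ - 1 - K p q₀ * K p q₀) * hp
        · linear_combination -(K p' q₀ * K p' q₀) * hp - hp'
    _ = _ := by simp [smul_one_eq_diagonal, diagonal_apply]

variable [Fintype ι]

theorem border_transpose_mul_border (hK : K.IsHadamard) (q₀ : κ) :
    (border ι K q₀)ᵀ * border ι K q₀ = (card κ * card ι : ℤ) • 1 := by
  ext q q'
  have hcol : ∑ p, K p q₀ * K p q * (K p q₀ * K p q') =
      if (q : κ) = q' then (card κ : ℤ) else 0 := by
    rw [← sum_mul_apply_of_isHadamard hK.transpose]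
    refine Finset.sum_congr rfl fun p _ => ?_
    rw [transpose_apply, transpose_apply]
    linear_combination K p q * K p q' * apply_mul_self_of_isHadamard hK p q₀
  simp [border, mul_apply, Fintype.sum_prod_type, hcol, one_apply, Subtype.ext_iff, mul_comm]

variable [DecidableEq ι]

theorem borderedCore_apply_eq_or (hQ : IsSkewConferenceCore Q) (hK : K.IsHadamard) (q₀ : κ)
    (a b : ι × κ ⊕ {q // q ≠ q₀}) :
    borderedCore Q K q₀ a b = 1 ∨ borderedCore Q K q₀ a b = -1 := by
  have hK_sign (p q : κ) : K p q = 1 ∨ K p q = -1 :=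
    Unitary.mem_iff_eq_one_or_eq_neg_one.mp (hK.apply_mem p q)
  have hborder (p q : κ) : K p q₀ * K p q = 1 ∨ K p q₀ * K p q = -1 :=
    Unitary.mem_iff_eq_one_or_eq_neg_one.mp (mul_mem (hK.apply_mem p q₀) (hK.apply_mem p q))
  rcases a with ⟨i, p⟩ | q <;> rcases b with ⟨j, p'⟩ | q'
  · rcases eq_or_ne i j with rfl | hij
    · simp [borderedCore, coreBlock, hQ.apply_self]
    · rcases hQ.apply_of_ne i j hij with hq | hq <;> rcases hK_sign p p' with hk | hk <;>
        simp [borderedCore, coreBlock, hq, hk, hij]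
  · exact hborder p q'
  · exact hborder p' q
  · exact Or.inl rfl

theorem coreBlock_mul_border (hQ : IsSkewConferenceCore Q) (hK : K.IsHadamard) (q₀ : κ) :
    coreBlock Q K * border ι K q₀ = 0 := by
  ext ⟨i, p⟩ q
  have hQi : ∑ j, Q i j = 0 := by
    simpa [mul_apply] using congrFun (congrFun (hQ.mul_ones (k := Unit)) i) ()
  have hcol : ∑ p, K p q₀ * K p q = 0 := by
    simpa [q.2.symm] using sum_mul_apply_of_isHadamard hK.transpose q₀ q
  simp [coreBlock, border, mul_apply, Fintype.sum_prod_type, sub_mul, one_apply, mul_assoc,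
    ← Finset.mul_sum, ← Finset.sum_mul, Finset.sum_sub_distrib, hQi, hcol]

theorem coreBlock_mul_transpose (hQ : IsSkewConferenceCore Q) (hK : K.IsHadamard) {s : ℤ}
    (hrow : ∀ p, ∑ q, K p q = s) :
    coreBlock Q K * (coreBlock Q K)ᵀ =
      ((card ι : ℤ) • 1 - J) ⊗ₖ ((card κ : ℤ) • 1) + 1 ⊗ₖ ((card κ : ℤ) • J) := by
  have hQK : Q ⊗ₖ K * (Q ⊗ₖ K)ᵀ = ((card ι : ℤ) • 1 - J) ⊗ₖ ((card κ : ℤ) • 1) := by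
    rw [← kroneckerMap_transpose, ← mul_kronecker_mul, hQ.mul_transpose,
      ← conjTranspose_eq_transpose_of_trivial K, hK.mul_conjTranspose]
  have hJ : (1 ⊗ₖ J : Matrix (ι × κ) (ι × κ) ℤ)ᵀ = 1 ⊗ₖ J := by
    rw [← kroneckerMap_transpose, transpose_one]; rfl
  have hJJ : (1 ⊗ₖ J : Matrix (ι × κ) (ι × κ) ℤ) * 1 ⊗ₖ J = 1 ⊗ₖ ((card κ : ℤ) • J) := by
    rw [← mul_kronecker_mul, Matrix.one_mul, ones_mul_ones]
  have hKJ : K * (J : Matrix κ κ ℤ) = (J : Matrix κ κ ℤ) * Kᵀ := by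
    ext; simp [mul_apply, hrow]
  have hcross : Q ⊗ₖ K * 1 ⊗ₖ J + 1 ⊗ₖ J * (Q ⊗ₖ K)ᵀ = 0 := by
    rw [← kroneckerMap_transpose, ← mul_kronecker_mul, ← mul_kronecker_mul, Matrix.mul_one,
      Matrix.one_mul, hKJ, ← add_kronecker, hQ.transpose_eq_neg, add_neg_cancel,
      zero_kronecker]
  calc coreBlock Q K * (coreBlock Q K)ᵀ
      = Q ⊗ₖ K * (Q ⊗ₖ K)ᵀ - (Q ⊗ₖ K * 1 ⊗ₖ J + 1 ⊗ₖ J * (Q ⊗ₖ K)ᵀ) + 1 ⊗ₖ J * 1 ⊗ₖ J := by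
        rw [coreBlock, transpose_sub, hJ]; noncomm_ring
    _ = _ := by rw [hQK, hcross, hJJ, sub_zero]

theorem coreBlock_mul_transpose_add_border_mul_transpose (hQ : IsSkewConferenceCore Q)
    (hK : K.IsHadamard) {s : ℤ} (hrow : ∀ p, ∑ q, K p q = s) (q₀ : κ) :
    coreBlock Q K * (coreBlock Q K)ᵀ + border ι K q₀ * (border ι K q₀)ᵀ =
      1 ⊗ₖ ((card κ * card ι : ℤ) • 1 + (card κ : ℤ) • J) + (-1 : ℤ) • J := by
  rw [coreBlock_mul_transpose hQ hK hrow, border_mul_transpose hK]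
  ext
  simp only [Matrix.add_apply, Matrix.sub_apply, Matrix.smul_apply, kroneckerMap_apply, of_apply,
    Pi.one_apply, smul_eq_mul]
  ring

theorem mul_det_one_kronecker_sub_ones {a b : ℤ} (h : a + card κ * b ≠ 0) :
    (a + card κ * b) *
        (1 ⊗ₖ (a • 1 + b • J) + (-1 : ℤ) • J : Matrix (ι × κ) (ι × κ) ℤ).det =
      (a + card κ * b - card ι * card κ) * (a • 1 + b • J : Matrix κ κ ℤ).det ^ card ι := by
  have hX : (a • 1 + b • J : Matrix κ κ ℤ) * J = (a + card κ * b) • (J : Matrix κ κ ℤ) := by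
    rw [Matrix.add_mul, Matrix.smul_mul, Matrix.smul_mul, Matrix.one_mul, ones_mul_ones, smul_smul,
      ← add_smul, mul_comm b]
  have hJ : (J : Matrix (ι × κ) (ι × κ) ℤ) = (J : Matrix ι ι ℤ) ⊗ₖ (J : Matrix κ κ ℤ) := by
    ext; simp
  have hD : 1 ⊗ₖ (a • 1 + b • J) * J = (a + card κ * b) • (J : Matrix (ι × κ) (ι × κ) ℤ) := by
    rw [hJ, ← mul_kronecker_mul, hX, Matrix.one_mul, kronecker_smul]
  rw [mul_det_add_smul_ones h hD, det_kronecker, det_one, one_pow, one_mul, card_prod]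
  push_cast
  ring

theorem det_borderedCore_sq [Nonempty ι] (hQ : IsSkewConferenceCore Q) (hK : K.IsHadamard)
    {s : ℤ} (hrow : ∀ p, ∑ q, K p q = s) (q₀ : κ) {n h : ℤ} (hn : n = card ι) (hh : h = card κ) :
    (h * n) ^ card ι * (h * n + h ^ 2) * (borderedCore Q K q₀).det ^ 2 =
      h ^ 2 * ((h * n) ^ card κ * (h * n + h ^ 2)) ^ card ι * (h * n) ^ (card κ - 1) := by
  have hn_pos : 0 < n := by rw [hn]; exact_mod_cast card_pos
  have hh_pos : 0 < h := by rw [hh]; exact_mod_cast card_pos_iff.mpr ⟨q₀⟩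
  have hcard : card {q // q ≠ q₀} = card κ - 1 := Set.card_ne_eq q₀
  have hX := mul_det_smul_one_add_smul_ones (m := κ) (h * n) h
  have hG := mul_det_one_kronecker_sub_ones (ι := ι) (κ := κ) (a := h * n) (b := h)
    (by rw [← hh]; positivity)
  have hsq := det_fromBlocks_sq_of_mul_eq_zero (c := h * n) (by positivity)
    (coreBlock_mul_border hQ hK q₀) (by rw [border_transpose_mul_border hK, hh, hn]) J
  rw [coreBlock_mul_transpose_add_border_mul_transpose hQ hK hrow, ← hn, ← hh] at hsq
  rw [← hn, ← hh] at hG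
  rw [← hh] at hX
  rw [borderedCore, hsq, hcard, pow_two h, ← hX]
  linear_combination (h * n) ^ card ι * (h * n) ^ (card κ - 1) * hG

end BorderedCore

section OnesSubTwo

variable {κ : Type*} [DecidableEq κ]

theorem ones_sub_two_apply (p q : κ) :
    (J - (2 : ℤ) • 1 : Matrix κ κ ℤ) p q = if p = q then -1 else 1 := by
  rw [smul_one_eq_diagonal, Matrix.sub_apply, diagonal_apply]
  split_ifs <;> rfl

variable [Fintype κ]

theorem sum_ones_sub_two (p : κ) :
    ∑ q, (J - (2 : ℤ) • 1 : Matrix κ κ ℤ) p q = card κ - 2 := by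
  simp [smul_one_eq_diagonal, diagonal_apply, Finset.sum_sub_distrib]

theorem isHadamard_ones_sub_two (hκ : card κ = 4) :
    (J - (2 : ℤ) • 1 : Matrix κ κ ℤ).IsHadamard := by
  have hT : (J - (2 : ℤ) • 1 : Matrix κ κ ℤ)ᴴ = J - (2 : ℤ) • 1 := by
    ext p q
    simp only [conjTranspose_apply, ones_sub_two_apply, star_trivial, eq_comm]
  have hJJ : (J : Matrix κ κ ℤ) * J = (4 : ℤ) • J := by rw [ones_mul_ones, hκ]; rfl
  refine .of_mul_conjTranspose (fun p q => ?_) ?_ ?_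
  · rw [Unitary.mem_iff_eq_one_or_eq_neg_one, ones_sub_two_apply]
    exact (ite_eq_or_eq _ _ _).symm
  · rw [hT, hκ, Matrix.sub_mul, Matrix.mul_sub, hJJ]
    simp only [Matrix.mul_smul, Matrix.mul_one, Matrix.smul_mul, Matrix.one_mul, Nat.cast_ofNat]
    module
  · rw [hκ]
    exact .of_ne_zero (by norm_num)

end OnesSubTwo

theorem det_le_md {n : ℕ} {M : Matrix (Fin n) (Fin n) ℤ} (hM : ∀ i j, M i j = 1 ∨ M i j = -1) :
    M.det ≤ md n := by
  refine le_csSup ⟨n.factorial, ?_⟩ ⟨M, hM, rfl⟩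
  rintro _ ⟨N, hN, rfl⟩
  have habs (i j) : AbsoluteValue.abs (N i j) ≤ 1 := by rcases hN i j with h | h <;> simp [h]
  simpa using (le_abs_self _).trans (det_le habs)

theorem exists_sign_matrix_det_eq_abs {m : Type*} [Fintype m] [DecidableEq m]
    {M : Matrix m m ℤ} (hM : ∀ i j, M i j = 1 ∨ M i j = -1) {n : ℕ} (hn : card m = n)
    (hn_one : 1 < n) :
    ∃ N : Matrix (Fin n) (Fin n) ℤ, (∀ i j, N i j = 1 ∨ N i j = -1) ∧ N.det = |M.det| := by
  obtain ⟨i, j, hij⟩ := exists_pair_of_one_lt_card (hn ▸ hn_one)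
  let e := (equivFinOfCardEq hn).symm
  rcases abs_choice M.det with habs | habs
  · exact ⟨M.submatrix e e, fun _ _ => hM _ _, by rw [det_submatrix_equiv_self, habs]⟩
  · refine ⟨(M.submatrix (Equiv.swap i j) id).submatrix e e, fun _ _ => hM _ _, ?_⟩
    rw [det_submatrix_equiv_self, det_permute, Equiv.Perm.sign_swap hij, habs]
    simp

theorem stmt_4 :
    (∃ M : Matrix (Fin 31) (Fin 31) ℤ,
      (∀ i j, M i j = 1 ∨ M i j = -1) ∧ M.det = 2^30 * 7^12 * 5324) ∧
    (2^30 * 7^12 * 5324 : ℤ) ≤ md 31 := by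
  have : Fact (Nat.Prime 7) := ⟨by norm_num⟩
  have hQ : IsSkewConferenceCore (paleyCore (ZMod 7)) :=
    isSkewConferenceCore_paleyCore (by rw [ZMod.card])
  have hK : (J - (2 : ℤ) • 1 : Matrix (Fin 4) (Fin 4) ℤ).IsHadamard := isHadamard_ones_sub_two rfl
  set B := borderedCore (paleyCore (ZMod 7)) (J - (2 : ℤ) • 1 : Matrix (Fin 4) (Fin 4) ℤ) 0 with hB
  have hsq : B.det ^ 2 = (2^30 * 7^12 * 5324) ^ 2 := by
    have h := det_borderedCore_sq hQ hK sum_ones_sub_two 0 (n := 7) (h := 4) rfl rfl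
    rw [← hB, ZMod.card, Fintype.card_fin] at h
    exact mul_left_cancel₀ (by norm_num) (h.trans (by norm_num))
  obtain ⟨M, hM, hdet⟩ := exists_sign_matrix_det_eq_abs (M := B) (n := 31)
    (borderedCore_apply_eq_or hQ hK 0) (by simp) (by norm_num)
  rw [(sq_eq_sq_iff_abs_eq_abs _ _).mp hsq, abs_of_pos (by norm_num)] at hdet
  exact ⟨⟨M, hM, hdet⟩, hdet ▸ det_le_md hM⟩
end
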